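/- Let an m-stage implicit Runge-Kutta method with coefficient matrix A, weights b and nodes c satisfy: A is invertible, b_j ≠ 0 for all j = 1,…,m, the nodes c_1,…,c_m are pairwise distinct, and the simplifying conditions C(m) and D(m) hold. Then 𝟙^T y ≠ 0 for every eigenvector y ∈ ℂ^m of the transpose A^T. -/

import Mathlib

/-! STATEMENT 1: For an m-stage implicit Runge-Kutta method `(A, b, c)` with `A`
invertible, nonzero weights, pairwise distinct nodes, and the simplifying conditions
`C(m)` and `D(m)`, one has `𝟙ᵀ y ≠ 0` for every (complex) eigenvector `y` of `Aᵀ`. -/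

open Finset

/-! Under the simplifying condition `C(s)`, `A` acts on the powers of the nodes as integration,
so `cᵏ = k! Aᵏ 𝟙` for `k ≤ s`. An eigenvector `y` of `Aᵀ` with eigenvalue `μ` therefore has the
moments `yᵀ cᵏ = k! μᵏ (𝟙ᵀ y)`. If `𝟙ᵀ y` were zero, the first `m` moments of `y` at the `m`
distinct nodes would all vanish, and the Vandermonde matrix would force `y = 0`. -/

open Matrix
open scoped Nat

variable {ι R S : Type*} [Fintype ι]

/-- The simplifying condition `C(s)` on the coefficient matrix `A` and the nodes `c` of a
Runge-Kutta method, with powers of `c` taken entrywise. It is shifted to start at `k = 0` and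
cleared of denominators, so that it makes sense over any semiring. -/
def SimplifyingConditionC [Semiring R] (A : Matrix ι ι R) (c : ι → R) (s : ℕ) : Prop :=
  ∀ k < s, c ^ (k + 1) = (k + 1) • A *ᵥ c ^ k

theorem simplifyingConditionC_iff_sum_eq_div {K : Type*} [Field K] [CharZero K]
    {A : Matrix ι ι K} {c : ι → K} {s : ℕ} :
    SimplifyingConditionC A c s ↔
      ∀ k ∈ Icc 1 s, ∀ i, ∑ j, A i j * c j ^ (k - 1) = c i ^ k / (k : K) := by
  have entrywise (k : ℕ) : c ^ (k + 1) = (k + 1) • A *ᵥ c ^ k ↔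
      ∀ i, ∑ j, A i j * c j ^ k = c i ^ (k + 1) / ((k + 1 : ℕ) : K) := by
    refine funext_iff.trans (forall_congr' fun i => ?_)
    rw [eq_div_iff (Nat.cast_ne_zero.mpr k.succ_ne_zero), eq_comm, Pi.smul_apply, nsmul_eq_mul,
      mul_comm]
    rfl
  constructor
  · intro h k hk
    obtain ⟨k, rfl⟩ := Nat.exists_eq_add_of_le' (mem_Icc.mp hk).1
    exact (entrywise k).mp (h k (mem_Icc.mp hk).2)
  · intro h k hk
    exact (entrywise k).mpr (h (k + 1) (mem_Icc.mpr ⟨k.succ_pos, hk⟩))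

namespace SimplifyingConditionC

theorem map [Semiring R] [Semiring S] {A : Matrix ι ι R} {c : ι → R} {s : ℕ}
    (h : SimplifyingConditionC A c s) (f : R →+* S) :
    SimplifyingConditionC (A.map f) (f ∘ c) s := by
  intro k hk
  ext i
  simpa [mulVec, dotProduct] using congrArg f (congrFun (h k hk) i)

theorem dotProduct_pow_of_vecMul_eq_smul [CommSemiring R] {A : Matrix ι ι R} {c y : ι → R}
    {μ : R} {s k : ℕ} (h : SimplifyingConditionC A c s) (hy : y ᵥ* A = μ • y) (hk : k ≤ s) :
    y ⬝ᵥ c ^ k = k ! * μ ^ k * ∑ j, y j := by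
  induction k with
  | zero => simp [dotProduct_one]
  | succ k ih =>
    calc y ⬝ᵥ c ^ (k + 1)
        = (k + 1) • (y ⬝ᵥ A *ᵥ c ^ k) := by rw [h k hk, dotProduct_smul]
      _ = (k + 1) • (μ * (y ⬝ᵥ c ^ k)) := by
        rw [dotProduct_mulVec, hy, smul_dotProduct, smul_eq_mul]
      _ = (k + 1)! * μ ^ (k + 1) * ∑ j, y j := by
        rw [ih (Nat.le_of_succ_le hk), Nat.factorial_succ, nsmul_eq_mul]
        push_cast
        ring

end SimplifyingConditionC

theorem eq_zero_of_forall_dotProduct_pow_eq_zero [CommRing R] [IsDomain R] {c y : ι → R}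
    (hc : Function.Injective c) (h : ∀ k < Fintype.card ι, y ⬝ᵥ c ^ k = 0) : y = 0 := by
  let e := (Fintype.equivFin ι).symm
  have hye : y ∘ e = 0 := by
    refine eq_zero_of_forall_pow_sum_mul_pow_eq_zero (hc.comp e.injective) fun k => ?_
    exact (e.sum_comp fun j => y j * c j ^ (k : ℕ)).trans (h k k.isLt)
  exact e.surjective.injective_comp_right hye

theorem rk_ones_dot_transpose_eigenvector_ne_zero_general [CommRing R] [IsDomain R]
    {A : Matrix ι ι R} {c y : ι → R} {μ : R} {s : ℕ} (hs : Fintype.card ι ≤ s + 1)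
    (hc : Function.Injective c) (hC : SimplifyingConditionC A c s)
    (hy : y ≠ 0) (heig : Aᵀ *ᵥ y = μ • y) :
    ∑ j, y j ≠ 0 := by
  rw [mulVec_transpose] at heig
  intro hsum
  refine hy (eq_zero_of_forall_dotProduct_pow_eq_zero hc fun k hk => ?_)
  rw [hC.dotProduct_pow_of_vecMul_eq_smul heig (by lia), hsum, mul_zero]

theorem rk_ones_dot_transpose_eigenvector_ne_zero
    (m : ℕ) (hm : 0 < m)
    (A : Matrix (Fin m) (Fin m) ℝ) (b c : Fin m → ℝ)
    (hA : IsUnit A.det)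
    (hb : ∀ j, b j ≠ 0)
    (hc : Function.Injective c)
    (hCcond : ∀ k ∈ Finset.Icc 1 m, ∀ i, ∑ j, A i j * c j ^ (k - 1) = c i ^ k / (k : ℝ))
    (hDcond : ∀ k ∈ Finset.Icc 1 m, ∀ j,
      ∑ i, b i * c i ^ (k - 1) * A i j = b j * (1 - c j ^ k) / (k : ℝ))
    (lam : ℂ) (y : Fin m → ℂ) (hy : y ≠ 0)
    (heig : ((A.map (Complex.ofReal)).transpose).mulVec y = lam • y) :
    ∑ j, y j ≠ 0 :=
  rk_ones_dot_transpose_eigenvector_ne_zero_general (by simp) (Complex.ofReal_injective.comp hc)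
    ((simplifyingConditionC_iff_sum_eq_div.mpr hCcond).map Complex.ofRealHom) hy heig
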